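/- For all natural numbers j, a, b, the image under the bit-interleaving (z-order) map Z of the aligned 2^j × 2^j subsquare {(x, y) : a * 2^j ≤ x < (a+1) * 2^j and b * 2^j ≤ y < (b+1) * 2^j} is exactly the contiguous interval of integers {m : 4^j * Z a b ≤ m < 4^j * (Z a b + 1)}. In other words, the z-order indices of the points of any aligned subsquare form a set of consecutive integers. -/

import Mathlib

/-- The bit-interleaving (z-order) map: the binary expansion of `Z x y` interleaves
the bits of `y` and `x`, with the bits of `x` in the even positions and the bits of
`y` in the odd positions.  The sum is finite since all sufficiently high bits vanish. -/
noncomputable def Z (x y : ℕ) : ℕ :=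
  ∑ᶠ i : ℕ, (x / 2 ^ i % 2 * 4 ^ i + y / 2 ^ i % 2 * 2 * 4 ^ i)

theorem Z_eq_sum_range {x y n : ℕ} (hx : x < 2 ^ n) (hy : y < 2 ^ n) :
    Z x y = ∑ i ∈ Finset.range n, (x / 2 ^ i % 2 * 4 ^ i + y / 2 ^ i % 2 * 2 * 4 ^ i) := by
  refine finsum_eq_sum_of_support_subset _ fun i hi => ?_
  by_contra h
  have hni : 2 ^ n ≤ 2 ^ i := Nat.pow_le_pow_right two_pos (by simpa using h)
  simp [Nat.div_eq_of_lt (hx.trans_le hni), Nat.div_eq_of_lt (hy.trans_le hni)] at hi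

theorem Z_eq_mod_add_four_mul (x y : ℕ) :
    Z x y = x % 2 + 2 * (y % 2) + 4 * Z (x / 2) (y / 2) := by
  have hlt : x + y < 2 ^ (x + y) := Nat.lt_two_pow_self
  rw [Z_eq_sum_range (n := x + y + 1) (by omega) (by omega),
    Z_eq_sum_range (x := x / 2) (y := y / 2) (n := x + y) (by omega) (by omega),
    Finset.sum_range_succ', Finset.mul_sum, add_comm]
  congr 1
  · simp [mul_comm]
  · refine Finset.sum_congr rfl fun i _ => ?_
    rw [Nat.div_div_eq_div_mul, Nat.div_div_eq_div_mul, ← pow_succ']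
    ring

theorem Z_zero_zero : Z 0 0 = 0 := by
  simp [Z]

theorem Z_div_four_pow (j x y : ℕ) : Z x y / 4 ^ j = Z (x / 2 ^ j) (y / 2 ^ j) := by
  induction j generalizing x y with
  | zero => simp
  | succ j ih =>
    have hdiv : Z x y / 4 = Z (x / 2) (y / 2) := by
      have := Z_eq_mod_add_four_mul x y
      omega
    rw [pow_succ', pow_succ', ← Nat.div_div_eq_div_mul, hdiv, ih, Nat.div_div_eq_div_mul,
      Nat.div_div_eq_div_mul]

theorem exists_Z_eq (m : ℕ) : ∃ x y, Z x y = m := by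
  induction m using Nat.strong_induction_on with
  | _ m ih =>
    rcases Nat.eq_zero_or_pos m with rfl | hm
    · exact ⟨0, 0, Z_zero_zero⟩
    · obtain ⟨x, y, hxy⟩ := ih (m / 4) (by omega)
      refine ⟨2 * x + m % 2, 2 * y + m / 2 % 2, ?_⟩
      rw [Z_eq_mod_add_four_mul, show (2 * x + m % 2) / 2 = x by omega,
        show (2 * y + m / 2 % 2) / 2 = y by omega, hxy]
      omega

theorem Z_injective {x y u v : ℕ} (h : Z x y = Z u v) : x = u ∧ y = v := by
  induction hs : x + y + u + v using Nat.strong_induction_on generalizing x y u v with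
  | _ s ih =>
    rcases Nat.eq_zero_or_pos s with rfl | hpos
    · omega
    · have hxy := Z_eq_mod_add_four_mul x y
      have huv := Z_eq_mod_add_four_mul u v
      have := ih (x / 2 + y / 2 + u / 2 + v / 2) (by omega)
        (x := x / 2) (y := y / 2) (u := u / 2) (v := v / 2) (by omega) rfl
      omega

/-- The z-order indices of the points of any aligned `2^j × 2^j` subsquare form a
contiguous interval of integers. -/
theorem zorder_subsquare_image (j a b : ℕ) :
    (fun p : ℕ × ℕ => Z p.1 p.2) ''
        {p : ℕ × ℕ | a * 2 ^ j ≤ p.1 ∧ p.1 < (a + 1) * 2 ^ j ∧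
                     b * 2 ^ j ≤ p.2 ∧ p.2 < (b + 1) * 2 ^ j} =
      {m : ℕ | 4 ^ j * Z a b ≤ m ∧ m < 4 ^ j * (Z a b + 1)} := by
  have mem_block (c n k : ℕ) (hk : 0 < k) : n / k = c ↔ c * k ≤ n ∧ n < (c + 1) * k := by
    rw [← Nat.le_div_iff_mul_le hk, ← Nat.div_lt_iff_lt_mul hk]; omega
  ext m
  simp only [Set.mem_image, Set.mem_ofPred_eq, Prod.exists]
  rw [mul_comm (4 ^ j), mul_comm (4 ^ j), ← mem_block _ _ _ (by positivity)]
  constructor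
  · rintro ⟨x, y, ⟨hax, hxa, hby, hyb⟩, rfl⟩
    rw [Z_div_four_pow, (mem_block a x _ (by positivity)).2 ⟨hax, hxa⟩,
      (mem_block b y _ (by positivity)).2 ⟨hby, hyb⟩]
  · intro hm
    obtain ⟨x, y, rfl⟩ := exists_Z_eq m
    rw [Z_div_four_pow] at hm
    obtain ⟨hx, hy⟩ := Z_injective hm
    rw [mem_block _ _ _ (by positivity)] at hx hy
    exact ⟨x, y, ⟨hx.1, hx.2, hy.1, hy.2⟩, rfl⟩
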